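/- arXiv:math-ph/0412009 — 2 statements merged into one kernel-verified Lean document; each statement's English description precedes it below -/
import Mathlib

section
/- The maximum of Wehrl minus quantum entropy is attained at a pure state: Let H be a finite-dimensional complex Hilbert space, (Ω,μ) a measure space, and a ↦ φ_a ∈ H a measurable family of unit vectors with ∫_Ω |φ_a⟩⟨φ_a| dμ(a) = id_H (Bochner integral). Define S^W[ρ] = ∫_Ω φ( ⟨φ_a, ρ φ_a⟩ ) dμ(a) for density matrices ρ on H, where φ(x) = −x ln x (with φ(0)=0). Then for every density matrix ρ on H there exists a unit vector ψ ∈ H such that S^W[|ψ⟩⟨ψ|] ≥ S^W[ρ] − S[ρ] (note S[|ψ⟩⟨ψ|] = 0). -/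
open Matrix Kronecker Real
open scoped ComplexOrder

/-- Von Neumann entropy of a (Hermitian) matrix: the sum of `-λ ln λ` over its
eigenvalues, with the convention `0 ln 0 = 0`. -/
noncomputable def entropy {n : Type*} [Fintype n] [DecidableEq n]
    (A : Matrix n n ℂ) : ℝ :=
  if h : A.IsHermitian then ∑ i, Real.negMulLog (h.eigenvalues i) else 0

/-- Partial trace over the first factor of a twofold tensor product. -/
noncomputable def ptraceFst {m k : Type*} [Fintype m]
    (ρ : Matrix (m × k) (m × k) ℂ) : Matrix k k ℂ :=
  Matrix.of fun i j => ∑ a : m, ρ (a, i) (a, j)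

/-- Partial trace over the second factor of a twofold tensor product. -/
noncomputable def ptraceSnd {m k : Type*} [Fintype k]
    (ρ : Matrix (m × k) (m × k) ℂ) : Matrix m m ℂ :=
  Matrix.of fun i j => ∑ a : k, ρ (i, a) (j, a)

/-- Partial trace over the first factor of a threefold tensor product
(indexed as `(H₁ ⊗ H₂) ⊗ H₃`). -/
noncomputable def ptraceFst₃ {a b c : Type*} [Fintype a]
    (ρ : Matrix ((a × b) × c) ((a × b) × c) ℂ) : Matrix (b × c) (b × c) ℂ :=
  Matrix.of fun p q => ∑ i : a, ρ ((i, p.1), p.2) ((i, q.1), q.2)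

open MeasureTheory

/-- Wehrl entropy of `ρ` with respect to the family of coherent states `φ`. -/
noncomputable def wehrlEntropy {n Ω : Type*} [Fintype n] [MeasurableSpace Ω]
    (μ : Measure Ω) (φ : Ω → n → ℂ) (ρ : Matrix n n ℂ) : ℝ :=
  ∫ a, Real.negMulLog ((star (φ a) ⬝ᵥ ρ *ᵥ (φ a)).re) ∂μ

/-!
Write `ρ = ∑ i, λ i • |v i⟩⟨v i|` in an orthonormal eigenbasis and let `Q i a = |⟨v i, φ a⟩|²`.
Subadditivity of `η x = -x log x` together with `η (x * y) = y * η x + x * η y` gives pointwise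
`η (∑ i, λ i * Q i a) ≤ ∑ i, (λ i * η (Q i a) + Q i a * η (λ i))`. Since each `Q i` has
integral `1`, integrating yields `S^W[ρ] ≤ ∑ i, λ i * S^W[|v i⟩⟨v i|] + S[ρ]`. The weights `λ i`
sum to `1`, so the eigenvector `v i` with the largest Wehrl entropy is the desired `ψ`.
-/

section NegMulLog

lemma negMulLog_add_le {x y : ℝ} (hx : 0 ≤ x) (hy : 0 ≤ y) :
    negMulLog (x + y) ≤ negMulLog x + negMulLog y := by
  rcases hx.eq_or_lt with rfl | hx
  · simp
  rcases hy.eq_or_lt with rfl | hy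
  · simp
  have hlogx : x * log x ≤ x * log (x + y) := by gcongr; linarith
  have hlogy : y * log y ≤ y * log (x + y) := by gcongr; linarith
  simp only [negMulLog]
  linarith

lemma negMulLog_sum_le {ι : Type*} {s : Finset ι} {f : ι → ℝ} (hf : ∀ i ∈ s, 0 ≤ f i) :
    negMulLog (∑ i ∈ s, f i) ≤ ∑ i ∈ s, negMulLog (f i) :=
  Finset.le_sum_of_subadditive_on_pred negMulLog (0 ≤ ·) negMulLog_zero.le
    (fun _ _ => negMulLog_add_le) (fun _ _ => add_nonneg) f hf

lemma negMulLog_sum_mul_le {ι : Type*} {s : Finset ι} {w f : ι → ℝ}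
    (hw : ∀ i ∈ s, 0 ≤ w i) (hf : ∀ i ∈ s, 0 ≤ f i) :
    negMulLog (∑ i ∈ s, w i * f i) ≤
      ∑ i ∈ s, (w i * negMulLog (f i) + f i * negMulLog (w i)) :=
  (negMulLog_sum_le fun i hi => mul_nonneg (hw i hi) (hf i hi)).trans_eq <|
    Finset.sum_congr rfl fun i _ => by rw [negMulLog_mul, add_comm]

end NegMulLog

section QuadraticForm

variable {n 𝕜 : Type*} [Fintype n] [RCLike 𝕜]

lemma norm_star_dotProduct_mulVec_le [DecidableEq n] (M : Matrix n n 𝕜) (x : n → 𝕜) :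
    ‖star x ⬝ᵥ M *ᵥ x‖ ≤ ‖toEuclideanCLM (n := n) (𝕜 := 𝕜) M‖ * RCLike.re (star x ⬝ᵥ x) := by
  set y : EuclideanSpace 𝕜 n := WithLp.toLp 2 x
  set T := toEuclideanCLM (n := n) (𝕜 := 𝕜) M
  have hM : star x ⬝ᵥ M *ᵥ x = inner 𝕜 y (T y) := by
    rw [EuclideanSpace.inner_eq_star_dotProduct, dotProduct_comm, ofLp_toEuclideanCLM]
  have hx : RCLike.re (star x ⬝ᵥ x) = ‖y‖ ^ 2 := by
    rw [← inner_self_eq_norm_sq (𝕜 := 𝕜), EuclideanSpace.inner_eq_star_dotProduct,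
      dotProduct_comm]
  calc ‖star x ⬝ᵥ M *ᵥ x‖ = ‖inner 𝕜 y (T y)‖ := by rw [hM]
    _ ≤ ‖y‖ * (‖T‖ * ‖y‖) := (norm_inner_le_norm _ _).trans (by gcongr; exact T.le_opNorm y)
    _ = ‖T‖ * RCLike.re (star x ⬝ᵥ x) := by rw [hx]; ring

lemma star_dotProduct_mulVec_eq_sum (M : Matrix n n 𝕜) (x : n → 𝕜) :
    star x ⬝ᵥ M *ᵥ x = ∑ i, ∑ j, M i j * (x j * starRingEnd 𝕜 (x i)) := by
  simp only [dotProduct, mulVec, Finset.mul_sum, Pi.star_apply, RCLike.star_def]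
  exact Finset.sum_congr rfl fun i _ => Finset.sum_congr rfl fun j _ => by ring

variable [DecidableEq n] {A : Matrix n n 𝕜}

lemma isHermitian_eq_sum_eigenvalues_smul_vecMulVec (hA : A.IsHermitian) :
    A = ∑ i, hA.eigenvalues i •
      vecMulVec ⇑(hA.eigenvectorBasis i) (star ⇑(hA.eigenvectorBasis i)) := by
  conv_lhs => rw [hA.spectral_theorem]
  ext j k
  simp only [Unitary.conjStarAlgAut_apply, mul_apply (N := star _), mul_diagonal,
    Matrix.sum_apply, Matrix.smul_apply, vecMulVec_apply, star_apply, Pi.star_apply,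
    hA.eigenvectorUnitary_apply, Function.comp_apply, RCLike.real_smul_eq_coe_mul]
  exact Finset.sum_congr rfl fun i _ => by ring

lemma star_eigenvectorBasis_dotProduct_self (hA : A.IsHermitian) (i : n) :
    star ⇑(hA.eigenvectorBasis i) ⬝ᵥ ⇑(hA.eigenvectorBasis i) = 1 := by
  rw [dotProduct_comm, ← EuclideanSpace.inner_eq_star_dotProduct, hA.eigenvectorBasis.inner_eq_one]

end QuadraticForm

section Husimi

variable {n Ω : Type*} [Fintype n]

/-- The Husimi function (lower symbol) `a ↦ ⟨φ a, M φ a⟩` of the operator `M` with respect to the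
family of vectors `φ`; its entropy integral is the Wehrl entropy. The real part loses nothing for
Hermitian `M`. -/
def husimi (φ : Ω → n → ℂ) (M : Matrix n n ℂ) (a : Ω) : ℝ :=
  (star (φ a) ⬝ᵥ M *ᵥ φ a).re

lemma husimi_nonneg (φ : Ω → n → ℂ) {M : Matrix n n ℂ} (hM : M.PosSemidef) (a : Ω) :
    0 ≤ husimi φ M a :=
  hM.re_dotProduct_nonneg (φ a)

lemma husimi_sum_smul {ι : Type*} (φ : Ω → n → ℂ) (s : Finset ι) (w : ι → ℝ)
    (M : ι → Matrix n n ℂ) (a : Ω) :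
    husimi φ (∑ i ∈ s, w i • M i) a = ∑ i ∈ s, w i * husimi φ (M i) a := by
  simp only [husimi, sum_mulVec, smul_mulVec, dotProduct_sum, dotProduct_smul, Complex.re_sum,
    Complex.smul_re, smul_eq_mul]

variable [MeasurableSpace Ω] {μ : Measure Ω} {φ : Ω → n → ℂ}

lemma wehrlEntropy_eq_integral_husimi (M : Matrix n n ℂ) :
    wehrlEntropy μ φ M = ∫ a, negMulLog (husimi φ M a) ∂μ :=
  rfl

lemma isFiniteMeasure_of_integrable_mul_conj
    (hφu : ∀ a, star (φ a) ⬝ᵥ φ a = 1)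
    (hφint : ∀ i, Integrable (fun a => φ a i * starRingEnd ℂ (φ a i)) μ) :
    IsFiniteMeasure μ := by
  have hsum : Integrable (fun a => ∑ i, φ a i * starRingEnd ℂ (φ a i)) μ :=
    integrable_finsetSum _ fun i _ => hφint i
  have hone : (fun a => ∑ i, φ a i * starRingEnd ℂ (φ a i)) = fun _ => 1 :=
    funext fun a => (dotProduct_comm _ _).trans (hφu a)
  exact (integrable_const_iff_isFiniteMeasure one_ne_zero).1 (hone ▸ hsum)

variable (hφint : ∀ i j, Integrable (fun a => φ a i * starRingEnd ℂ (φ a j)) μ)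

include hφint

lemma integrable_star_dotProduct_mulVec (M : Matrix n n ℂ) :
    Integrable (fun a => star (φ a) ⬝ᵥ M *ᵥ φ a) μ := by
  simp only [star_dotProduct_mulVec_eq_sum]
  exact integrable_finsetSum _ fun i _ => integrable_finsetSum _ fun j _ =>
    (hφint j i).const_mul _

lemma integrable_husimi (M : Matrix n n ℂ) : Integrable (husimi φ M) μ :=
  (integrable_star_dotProduct_mulVec hφint M).re

lemma integral_husimi [DecidableEq n]
    (hφres : ∀ i j, ∫ a, φ a i * starRingEnd ℂ (φ a j) ∂μ = (1 : Matrix n n ℂ) i j)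
    (M : Matrix n n ℂ) : ∫ a, husimi φ M a ∂μ = M.trace.re := by
  have htrace : ∫ a, star (φ a) ⬝ᵥ M *ᵥ φ a ∂μ = M.trace := by
    simp only [star_dotProduct_mulVec_eq_sum]
    rw [integral_finsetSum _ fun i _ => integrable_finsetSum _ fun j _ =>
      (hφint j i).const_mul (M i j)]
    refine Finset.sum_congr rfl fun i _ => ?_
    rw [integral_finsetSum _ fun j _ => (hφint j i).const_mul (M i j)]
    simp_rw [integral_const_mul, hφres, ← mul_apply, mul_one, diag_apply]
  rw [← htrace]
  exact integral_re (integrable_star_dotProduct_mulVec hφint M)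

lemma integrable_negMulLog_husimi [IsFiniteMeasure μ] {C : ℝ}
    (hφb : ∀ᵐ a ∂μ, (star (φ a) ⬝ᵥ φ a).re ≤ C) (M : Matrix n n ℂ) :
    Integrable (fun a => negMulLog (husimi φ M a)) μ := by
  classical
  set R := ‖toEuclideanCLM (n := n) (𝕜 := ℂ) M‖ * C
  have hR : ∀ᵐ a ∂μ, husimi φ M a ∈ Metric.closedBall 0 R := by
    filter_upwards [hφb] with a ha
    rw [mem_closedBall_zero_iff]
    calc ‖husimi φ M a‖ ≤ ‖star (φ a) ⬝ᵥ M *ᵥ φ a‖ := Complex.abs_re_le_norm _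
      _ ≤ _ := norm_star_dotProduct_mulVec_le M (φ a)
      _ ≤ R := mul_le_mul_of_nonneg_left ha (norm_nonneg _)
  obtain ⟨B, hB⟩ := (isCompact_closedBall (0 : ℝ) R).exists_bound_of_continuousOn
    continuous_negMulLog.continuousOn
  exact .of_bound (continuous_negMulLog.comp_aestronglyMeasurable
    (integrable_husimi hφint M).aestronglyMeasurable) B (hR.mono fun a ha => hB _ ha)

lemma wehrlEntropy_sum_smul_le [DecidableEq n] [IsFiniteMeasure μ] {C : ℝ}
    (hφb : ∀ᵐ a ∂μ, (star (φ a) ⬝ᵥ φ a).re ≤ C)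
    (hφres : ∀ i j, ∫ a, φ a i * starRingEnd ℂ (φ a j) ∂μ = (1 : Matrix n n ℂ) i j)
    {ι : Type*} {s : Finset ι} {w : ι → ℝ} {M : ι → Matrix n n ℂ}
    (hw : ∀ i ∈ s, 0 ≤ w i) (hM : ∀ i ∈ s, (M i).PosSemidef) :
    wehrlEntropy μ φ (∑ i ∈ s, w i • M i) ≤
      ∑ i ∈ s, (w i * wehrlEntropy μ φ (M i) + (M i).trace.re * negMulLog (w i)) := by
  have hentropy (i : ι) : Integrable (fun a => w i * negMulLog (husimi φ (M i) a)) μ :=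
    (integrable_negMulLog_husimi hφint hφb (M i)).const_mul _
  have hmass (i : ι) : Integrable (fun a => husimi φ (M i) a * negMulLog (w i)) μ :=
    (integrable_husimi hφint (M i)).mul_const _
  have hsummand (i : ι) : Integrable (fun a => w i * negMulLog (husimi φ (M i) a) +
      husimi φ (M i) a * negMulLog (w i)) μ :=
    (hentropy i).add (hmass i)
  calc wehrlEntropy μ φ (∑ i ∈ s, w i • M i)
      ≤ ∫ a, ∑ i ∈ s, (w i * negMulLog (husimi φ (M i) a) +
          husimi φ (M i) a * negMulLog (w i)) ∂μ := by
        rw [wehrlEntropy_eq_integral_husimi]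
        refine integral_mono (integrable_negMulLog_husimi hφint hφb _)
          (integrable_finsetSum _ fun i _ => hsummand i) fun a => ?_
        dsimp only
        rw [husimi_sum_smul]
        exact negMulLog_sum_mul_le hw fun i hi => husimi_nonneg φ (hM i hi) a
    _ = ∑ i ∈ s, (w i * wehrlEntropy μ φ (M i) + (M i).trace.re * negMulLog (w i)) := by
        rw [integral_finsetSum _ fun i _ => hsummand i]
        refine Finset.sum_congr rfl fun i _ => ?_
        rw [integral_add (hentropy i) (hmass i), integral_const_mul, integral_mul_const,
          integral_husimi hφint hφres, wehrlEntropy_eq_integral_husimi]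

lemma wehrlEntropy_le_sum_eigenvectorBasis_add_entropy [DecidableEq n] [IsFiniteMeasure μ] {C : ℝ}
    (hφb : ∀ᵐ a ∂μ, (star (φ a) ⬝ᵥ φ a).re ≤ C)
    (hφres : ∀ i j, ∫ a, φ a i * starRingEnd ℂ (φ a j) ∂μ = (1 : Matrix n n ℂ) i j)
    {ρ : Matrix n n ℂ} (hρ : ρ.PosSemidef) :
    wehrlEntropy μ φ ρ ≤ ∑ i, hρ.isHermitian.eigenvalues i * wehrlEntropy μ φ
      (vecMulVec ⇑(hρ.isHermitian.eigenvectorBasis i)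
        (star ⇑(hρ.isHermitian.eigenvectorBasis i))) + entropy ρ := by
  have hH := hρ.isHermitian
  conv_lhs => rw [isHermitian_eq_sum_eigenvalues_smul_vecMulVec hH]
  refine (wehrlEntropy_sum_smul_le hφint hφb hφres (fun i _ => hρ.eigenvalues_nonneg i)
    fun i _ => posSemidef_vecMulVec_self_star _).trans_eq ?_
  simp only [trace_vecMulVec, dotProduct_comm _ (star _), star_eigenvectorBasis_dotProduct_self,
    Complex.one_re, one_mul, Finset.sum_add_distrib, entropy, dif_pos hH]

end Husimi

theorem wehrl_minus_quantum_entropy_le_pure_state_general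
    {n : Type*} [Fintype n] [DecidableEq n] [Nonempty n]
    {Ω : Type*} [MeasurableSpace Ω] (μ : Measure Ω) [IsFiniteMeasure μ]
    (φ : Ω → n → ℂ) {C : ℝ}
    (hφb : ∀ᵐ a ∂μ, (star (φ a) ⬝ᵥ φ a).re ≤ C)
    (hφint : ∀ i j, Integrable (fun a => φ a i * (starRingEnd ℂ) (φ a j)) μ)
    (hφres : ∀ i j, (∫ a, φ a i * (starRingEnd ℂ) (φ a j) ∂μ) =
      (1 : Matrix n n ℂ) i j)
    (ρ : Matrix n n ℂ) (hρ : ρ.PosSemidef) :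
    ∃ ψ : n → ℂ, star ψ ⬝ᵥ ψ = 1 ∧
      wehrlEntropy μ φ ρ - entropy ρ ≤
        ρ.trace.re * wehrlEntropy μ φ (Matrix.vecMulVec ψ (star ψ)) := by
  have hH := hρ.isHermitian
  let W (i : n) : ℝ := wehrlEntropy μ φ
    (vecMulVec ⇑(hH.eigenvectorBasis i) (star ⇑(hH.eigenvectorBasis i)))
  obtain ⟨m, hm⟩ := Finite.exists_max W
  refine ⟨_, star_eigenvectorBasis_dotProduct_self hH m, ?_⟩
  calc wehrlEntropy μ φ ρ - entropy ρ
      ≤ ∑ i, hH.eigenvalues i * W i :=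
        sub_le_iff_le_add.2 (wehrlEntropy_le_sum_eigenvectorBasis_add_entropy hφint hφb hφres hρ)
    _ ≤ ∑ i, hH.eigenvalues i * W m := by
        gcongr with i
        · exact hρ.eigenvalues_nonneg i
        · exact hm i
    _ = ρ.trace.re * W m := by
        rw [← Finset.sum_mul, hH.trace_eq_sum_eigenvalues]
        simp

/-- **The maximum of Wehrl minus quantum entropy is attained at a pure state**:
for every density matrix `ρ` there is a unit vector `ψ` with
`S^W[|ψ⟩⟨ψ|] ≥ S^W[ρ] − S[ρ]`. -/
theorem wehrl_minus_quantum_entropy_le_pure_state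
    {n : Type*} [Fintype n] [DecidableEq n]
    {Ω : Type*} [MeasurableSpace Ω] (μ : Measure Ω)
    (φ : Ω → n → ℂ)
    (hφm : ∀ i, Measurable fun a => φ a i)
    (hφu : ∀ a, star (φ a) ⬝ᵥ φ a = 1)
    (hφint : ∀ i j, Integrable (fun a => φ a i * (starRingEnd ℂ) (φ a j)) μ)
    (hφres : ∀ i j, (∫ a, φ a i * (starRingEnd ℂ) (φ a j) ∂μ) =
      (1 : Matrix n n ℂ) i j)
    (ρ : Matrix n n ℂ) (hρ : ρ.PosSemidef) (hρtr : ρ.trace = 1) :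
    ∃ ψ : n → ℂ, star ψ ⬝ᵥ ψ = 1 ∧
      wehrlEntropy μ φ ρ - entropy ρ ≤
        wehrlEntropy μ φ (Matrix.vecMulVec ψ (star ψ)) := by
  have : IsFiniteMeasure μ := isFiniteMeasure_of_integrable_mul_conj hφu fun i => hφint i i
  have : Nonempty n := not_isEmpty_iff.1 fun _ => by simp [trace] at hρtr
  simpa [hρtr] using wehrl_minus_quantum_entropy_le_pure_state_general μ φ (C := 1)
    (.of_forall fun a => by simp [hφu a]) hφint hφres ρ hρ
end

section
/- Stronger subadditivity with a continuum of operators (finite-dimensional integral version): Let H₁, H₂, H₃ be finite-dimensional complex Hilbert spaces, ρ₁₂₃ a density matrix on H₁⊗H₂⊗H₃, (Ω,μ) a measure space, and α ↦ K^α a measurable family of operators on H₁⊗H₂ satisfying ∫_Ω K^{α*}K^α dμ(α) = id_{H₁⊗H₂} (Bochner integral of operator-valued functions). Set n^α = Tr[(K^α⊗id₃) ρ₁₂₃ (K^{α*}⊗id₃)], and for α with n^α > 0 set ρ₂₃^α = Tr₁[(K^α⊗id₃) ρ₁₂₃ (K^{α*}⊗id₃)]/n^α and ρ₂^α = Tr₃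 ρ₂₃^α. Then S[ρ₁₂₃] − S[ρ₁₂] ≤ ∫_{{α : n^α>0}} n^α ( S[ρ₂₃^α] − S[ρ₂^α] ) dμ(α). -/
open Matrix Kronecker Real
open scoped ComplexOrder

open MeasureTheory

/-!
Relative entropy is an integral of traces of solutions of Sylvester equations: if `Z` solves
`(1 - s) σ Z + s Z ρ = ρ`, then `D(ρ‖σ) = ∫₀¹ Re Tr (Z ρ - σ Z) ds`. For each `s` the solution is
characterised by a quadratic variational inequality. Testing the inequality of a reduction of the
pair `(K ρ Kᴴ, K σ Kᴴ)` against the solution for `(ρ, σ)` produces a matrix `G`, independent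
of `K`, with `Tr G = D(ρ‖σ)` and such that the relative entropy of the reduced pair is at most
`Tr (Kᴴ K G)`.

For `σ = ρ₁₂ ⊗ 1` relative entropy is minus the conditional entropy, and `Tr₁` maps
`(K ⊗ 1) σ (Kᴴ ⊗ 1)` again to an operator of this form. Hence `n^α (S[ρ₂₃^α] - S[ρ₂^α])` is at least
`-Tr ((K^αᴴ K^α ⊗ 1) G)`, and integrating over `α` replaces `K^αᴴ K^α` by the identity.
-/

section BimoduleCalculus

variable {n : Type*} [Fintype n] [DecidableEq n] {ρ σ : Matrix n n ℂ}

/-- The matrix of inner products between the eigenvectors of `σ` (rows) and those of `ρ`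
(columns). -/
noncomputable def eigenOverlap (hρ : ρ.IsHermitian) (hσ : σ.IsHermitian) : Matrix n n ℂ :=
  star (hσ.eigenvectorUnitary : Matrix n n ℂ) * hρ.eigenvectorUnitary

/-- The joint functional calculus `g(L_σ, R_ρ)` of the commuting operators of left multiplication by
`σ` and right multiplication by `ρ`, applied to the identity matrix. -/
noncomputable def bimodCfc (hρ : ρ.IsHermitian) (hσ : σ.IsHermitian) (g : ℝ → ℝ → ℝ) :
    Matrix n n ℂ :=
  hσ.eigenvectorUnitary *
    of (fun j i => (g (hσ.eigenvalues j) (hρ.eigenvalues i) : ℂ) * eigenOverlap hρ hσ j i) *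
    star (hρ.eigenvectorUnitary : Matrix n n ℂ)

variable (hρ : ρ.IsHermitian) (hσ : σ.IsHermitian)

lemma cfc_mul_bimodCfc (f : ℝ → ℝ) (g : ℝ → ℝ → ℝ) :
    cfc f σ * bimodCfc hρ hσ g = bimodCfc hρ hσ fun q p => f q * g q p := by
  have hdiag : diagonal (RCLike.ofReal ∘ f ∘ hσ.eigenvalues) *
      of (fun j i => (g (hσ.eigenvalues j) (hρ.eigenvalues i) : ℂ) * eigenOverlap hρ hσ j i) =
      of fun j i => ((f (hσ.eigenvalues j) * g (hσ.eigenvalues j) (hρ.eigenvalues i) : ℝ) : ℂ) *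
        eigenOverlap hρ hσ j i := by
    ext j i
    simp [diagonal_mul, mul_assoc]
  rw [hσ.cfc_eq, IsHermitian.cfc, Unitary.conjStarAlgAut_apply, bimodCfc, bimodCfc, ← hdiag]
  simp only [Matrix.mul_assoc]
  rw [← Matrix.mul_assoc (star _) (hσ.eigenvectorUnitary : Matrix n n ℂ),
    Unitary.coe_star_mul_self, Matrix.one_mul]

lemma bimodCfc_mul_cfc (f : ℝ → ℝ) (g : ℝ → ℝ → ℝ) :
    bimodCfc hρ hσ g * cfc f ρ = bimodCfc hρ hσ fun q p => g q p * f p := by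
  have hdiag : of (fun j i =>
        (g (hσ.eigenvalues j) (hρ.eigenvalues i) : ℂ) * eigenOverlap hρ hσ j i) *
      diagonal (RCLike.ofReal ∘ f ∘ hρ.eigenvalues) =
      of fun j i => ((g (hσ.eigenvalues j) (hρ.eigenvalues i) * f (hρ.eigenvalues i) : ℝ) : ℂ) *
        eigenOverlap hρ hσ j i := by
    ext j i
    simp [mul_diagonal, mul_right_comm]
  rw [hρ.cfc_eq, IsHermitian.cfc, Unitary.conjStarAlgAut_apply, bimodCfc, bimodCfc, ← hdiag]
  simp only [Matrix.mul_assoc]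
  rw [← Matrix.mul_assoc (star _) (hρ.eigenvectorUnitary : Matrix n n ℂ),
    Unitary.coe_star_mul_self, Matrix.one_mul]

lemma mul_bimodCfc (g : ℝ → ℝ → ℝ) :
    σ * bimodCfc hρ hσ g = bimodCfc hρ hσ fun q p => q * g q p := by
  simpa only [cfc_id' ℝ σ hσ.isSelfAdjoint] using cfc_mul_bimodCfc hρ hσ (fun q => q) g

lemma bimodCfc_mul (g : ℝ → ℝ → ℝ) :
    bimodCfc hρ hσ g * ρ = bimodCfc hρ hσ fun q p => g q p * p := by
  simpa only [cfc_id' ℝ ρ hρ.isSelfAdjoint] using bimodCfc_mul_cfc hρ hσ (fun p => p) g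

lemma bimodCfc_one : bimodCfc hρ hσ (fun _ _ => 1) = 1 := by
  have hone : of (fun j i => ((1 : ℝ) : ℂ) * eigenOverlap hρ hσ j i) = eigenOverlap hρ hσ := by
    ext j i
    simp
  rw [bimodCfc, hone, eigenOverlap, ← Matrix.mul_assoc,
    Unitary.mul_star_self_of_mem hσ.eigenvectorUnitary.2, Matrix.one_mul,
    Unitary.mul_star_self_of_mem hρ.eigenvectorUnitary.2]

lemma bimodCfc_snd : bimodCfc hρ hσ (fun _ p => p) = ρ := by
  simpa only [bimodCfc_one, Matrix.one_mul, one_mul] using (bimodCfc_mul hρ hσ fun _ _ => 1).symm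

lemma bimodCfc_add (g h : ℝ → ℝ → ℝ) :
    bimodCfc hρ hσ g + bimodCfc hρ hσ h = bimodCfc hρ hσ fun q p => g q p + h q p := by
  simp only [bimodCfc, ← Matrix.add_mul, ← Matrix.mul_add]
  congr 2
  ext j i
  simp [add_mul]

lemma smul_bimodCfc (c : ℝ) (g : ℝ → ℝ → ℝ) :
    c • bimodCfc hρ hσ g = bimodCfc hρ hσ fun q p => c * g q p := by
  rw [bimodCfc, bimodCfc, ← Matrix.smul_mul, ← Matrix.mul_smul]
  congr 2
  ext j i
  simp [mul_assoc]

lemma bimodCfc_sub (g h : ℝ → ℝ → ℝ) :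
    bimodCfc hρ hσ g - bimodCfc hρ hσ h = bimodCfc hρ hσ fun q p => g q p - h q p := by
  simp only [bimodCfc, ← Matrix.sub_mul, ← Matrix.mul_sub]
  congr 2
  ext j i
  simp [sub_mul]

lemma bimodCfc_congr {g h : ℝ → ℝ → ℝ}
    (hgh : ∀ j i, eigenOverlap hρ hσ j i ≠ 0 → g (hσ.eigenvalues j) (hρ.eigenvalues i) =
      h (hσ.eigenvalues j) (hρ.eigenvalues i)) :
    bimodCfc hρ hσ g = bimodCfc hρ hσ h := by
  rw [bimodCfc, bimodCfc]
  congr 2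
  ext j i
  by_cases hji : eigenOverlap hρ hσ j i = 0
  · simp only [of_apply, hji, mul_zero]
  · simp only [of_apply, hgh j i hji]

lemma trace_bimodCfc (g : ℝ → ℝ → ℝ) :
    (bimodCfc hρ hσ g).trace = ((∑ j, ∑ i, g (hσ.eigenvalues j) (hρ.eigenvalues i) *
      ‖eigenOverlap hρ hσ j i‖ ^ 2 : ℝ) : ℂ) := by
  rw [bimodCfc, trace_mul_comm, ← Matrix.mul_assoc, trace_mul_comm]
  have hstar : star (hρ.eigenvectorUnitary : Matrix n n ℂ) * hσ.eigenvectorUnitary =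
      (eigenOverlap hρ hσ)ᴴ := by
    simp only [eigenOverlap, star_eq_conjTranspose, conjTranspose_mul, conjTranspose_conjTranspose]
  rw [hstar, trace]
  push_cast
  refine Finset.sum_congr rfl fun j _ => ?_
  rw [diag_apply, mul_apply]
  refine Finset.sum_congr rfl fun i _ => ?_
  rw [of_apply, conjTranspose_apply, mul_assoc, ← Complex.mul_conj', Complex.star_def]

lemma continuousOn_bimodCfc {X : Type*} [TopologicalSpace X] {t : Set X} {g : X → ℝ → ℝ → ℝ}
    (hg : ∀ j i, eigenOverlap hρ hσ j i ≠ 0 →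
      ContinuousOn (fun x => g x (hσ.eigenvalues j) (hρ.eigenvalues i)) t) :
    ContinuousOn (fun x => bimodCfc hρ hσ (g x)) t := by
  have hentry : ContinuousOn (fun x => of fun j i =>
      (g x (hσ.eigenvalues j) (hρ.eigenvalues i) : ℂ) * eigenOverlap hρ hσ j i) t := by
    refine continuousOn_pi.2 fun j => continuousOn_pi.2 fun i => ?_
    by_cases hji : eigenOverlap hρ hσ j i = 0
    · simpa only [of_apply, hji, mul_zero] using continuousOn_const
    · exact (Complex.continuous_ofReal.comp_continuousOn (hg j i hji)).mul continuousOn_const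
  exact (continuousOn_const.mul hentry).mul continuousOn_const

lemma integral_re_trace_bimodCfc {a b : ℝ} {g : ℝ → ℝ → ℝ → ℝ}
    (hg : ∀ j i, eigenOverlap hρ hσ j i ≠ 0 → IntervalIntegrable
      (fun s => g s (hσ.eigenvalues j) (hρ.eigenvalues i)) volume a b) :
    ∫ s in a..b, (bimodCfc hρ hσ (g s)).trace.re =
      (bimodCfc hρ hσ fun q p => ∫ s in a..b, g s q p).trace.re := by
  have hterm : ∀ j i, IntervalIntegrable (fun s => g s (hσ.eigenvalues j) (hρ.eigenvalues i) *
      ‖eigenOverlap hρ hσ j i‖ ^ 2) volume a b := fun j i => by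
    by_cases hji : eigenOverlap hρ hσ j i = 0
    · simp [hji]
    · exact (hg j i hji).mul_const _
  have hrow : ∀ j, IntervalIntegrable (fun s => ∑ i, g s (hσ.eigenvalues j) (hρ.eigenvalues i) *
      ‖eigenOverlap hρ hσ j i‖ ^ 2) volume a b := fun j => by
    simpa only [Finset.sum_fn] using IntervalIntegrable.sum Finset.univ fun i _ => hterm j i
  simp only [trace_bimodCfc, Complex.ofReal_re]
  rw [intervalIntegral.integral_finsetSum fun j _ => hrow j]
  refine Finset.sum_congr rfl fun j _ => ?_
  rw [intervalIntegral.integral_finsetSum fun i _ => hterm j i]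
  simp only [intervalIntegral.integral_mul_const]

end BimoduleCalculus

section RelEntropy

variable {n : Type*} [Fintype n] [DecidableEq n] {ρ σ : Matrix n n ℂ}

/-- The quantum relative entropy `D(ρ‖σ) = Tr ρ (ln ρ - ln σ)`. Since `Real.log 0 = 0`, it has its
usual meaning only when the kernel of `σ` is contained in that of `ρ`. -/
noncomputable def relEntropy (ρ σ : Matrix n n ℂ) : ℝ :=
  (ρ * (cfc Real.log ρ - cfc Real.log σ)).trace.re

lemma relEntropy_eq_trace_bimodCfc (hρ : ρ.IsHermitian) (hσ : σ.IsHermitian) :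
    relEntropy ρ σ =
      (bimodCfc hρ hσ fun q p => p * (Real.log p - Real.log q)).trace.re := by
  have hlogρ : ρ * cfc Real.log ρ = bimodCfc hρ hσ fun _ p => p * Real.log p := by
    simpa only [bimodCfc_snd] using bimodCfc_mul_cfc hρ hσ Real.log fun _ p => p
  have hlogσ : cfc Real.log σ * ρ = bimodCfc hρ hσ fun q p => Real.log q * p := by
    simpa only [bimodCfc_snd] using cfc_mul_bimodCfc hρ hσ Real.log fun _ p => p
  rw [relEntropy, Matrix.mul_sub, trace_sub, trace_mul_comm ρ (cfc Real.log σ), hlogσ, hlogρ,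
    ← trace_sub, bimodCfc_sub]
  simp only [mul_sub, mul_comm]

lemma eigenvalues_eq_zero_of_eigenOverlap_ne_zero (hρ : ρ.IsHermitian) (hσ : σ.IsHermitian)
    (hker : ∀ v, σ *ᵥ v = 0 → ρ *ᵥ v = 0) {i j : n} (hji : eigenOverlap hρ hσ j i ≠ 0)
    (hj : hσ.eigenvalues j = 0) : hρ.eigenvalues i = 0 := by
  have hρj : ρ *ᵥ hσ.eigenvectorBasis j = 0 :=
    hker _ (by rw [hσ.mulVec_eigenvectorBasis, hj, zero_smul])
  have hoverlap : eigenOverlap hρ hσ j i =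
      star (hσ.eigenvectorBasis j : n → ℂ) ⬝ᵥ (hρ.eigenvectorBasis i : n → ℂ) := by
    simp [eigenOverlap, mul_apply, dotProduct]
  have hscaled : (hρ.eigenvalues i : ℂ) * eigenOverlap hρ hσ j i = 0 := calc
    _ = star (hσ.eigenvectorBasis j : n → ℂ) ⬝ᵥ (ρ *ᵥ (hρ.eigenvectorBasis i : n → ℂ)) := by
      rw [hρ.mulVec_eigenvectorBasis, dotProduct_smul, hoverlap, Complex.real_smul]
    _ = star (ρ *ᵥ (hσ.eigenvectorBasis j : n → ℂ)) ⬝ᵥ (hρ.eigenvectorBasis i : n → ℂ) := by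
      rw [star_mulVec, hρ.eq, dotProduct_mulVec]
    _ = 0 := by rw [hρj, star_zero, zero_dotProduct]
  exact Complex.ofReal_eq_zero.1 ((mul_eq_zero.1 hscaled).resolve_right hji)

end RelEntropy

section Sylvester

variable {m n : Type*} [Fintype m] [Fintype n] {ρ σ Z : Matrix n n ℂ} {s : ℝ}

/-- For a solution `Z` of the Sylvester equation `(1 - s) σ Z + s Z ρ = ρ`, this is
`(1 - s)⁻¹ ((1 - s) Zᴴ σ Z + s Z ρ Zᴴ - ρ)`, written without the singular factor so that it stays
continuous up to `s = 1`. -/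
def sylvesterMajorant (ρ σ Z : Matrix n n ℂ) : Matrix n n ℂ :=
  Zᴴ * σ * Z - σ * Z * Zᴴ + ρ * Zᴴ - Zᴴ * σ

lemma smul_sylvesterMajorant (hρ : ρ.IsHermitian) (hσ : σ.IsHermitian)
    (hZ : (1 - s) • (σ * Z) + s • (Z * ρ) = ρ) :
    (1 - s) • sylvesterMajorant ρ σ Z =
      (1 - s) • (Zᴴ * σ * Z) + s • (Z * ρ * Zᴴ) - ρ := by
  have hZ_adjoint : (1 - s) • (Zᴴ * σ) + s • (ρ * Zᴴ) = ρ := by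
    simpa only [conjTranspose_add, conjTranspose_smul, conjTranspose_mul, hρ.eq, hσ.eq,
      star_trivial] using congrArg conjTranspose hZ
  have hZ_mul : (1 - s) • (σ * Z * Zᴴ) + s • (Z * ρ * Zᴴ) = ρ * Zᴴ := by
    simpa only [Matrix.add_mul, Matrix.smul_mul] using congrArg (· * Zᴴ) hZ
  rw [sylvesterMajorant, smul_sub, smul_add, smul_sub, eq_sub_of_add_eq hZ_mul,
    eq_sub_of_add_eq hZ_adjoint, sub_smul 1 s (ρ * Zᴴ), one_smul]
  abel

lemma re_trace_conjTranspose (A : Matrix n n ℂ) : Aᴴ.trace.re = A.trace.re := by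
  rw [trace_conjTranspose, Complex.star_def, Complex.conj_re]

lemma re_trace_sylvesterMajorant (hρ : ρ.IsHermitian) (hσ : σ.IsHermitian) :
    (sylvesterMajorant ρ σ Z).trace.re = (Z * ρ - σ * Z).trace.re := by
  have hadjoint : ρ * Zᴴ - Zᴴ * σ = (Z * ρ - σ * Z)ᴴ := by
    simp only [conjTranspose_sub, conjTranspose_mul, hρ.eq, hσ.eq]
  rw [sylvesterMajorant, add_sub_assoc, hadjoint, trace_add, trace_sub, Matrix.mul_assoc,
    trace_mul_comm, sub_self, zero_add, re_trace_conjTranspose]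

lemma two_mul_re_trace_mul_le (hσ : σ.PosSemidef) (A B : Matrix m n ℂ) :
    2 * (A * σ * Bᴴ).trace.re ≤ (A * σ * Aᴴ).trace.re + (B * σ * Bᴴ).trace.re := by
  have hnonneg : 0 ≤ ((A - B) * σ * (A - B)ᴴ).trace.re :=
    (Complex.nonneg_iff.1 (hσ.mul_mul_conjTranspose_same _).trace_nonneg).1
  have hsymm : (B * σ * Aᴴ).trace.re = (A * σ * Bᴴ).trace.re := by
    rw [← re_trace_conjTranspose]
    simp only [conjTranspose_mul, conjTranspose_conjTranspose, hσ.isHermitian.eq, Matrix.mul_assoc]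
  simp only [conjTranspose_sub, Matrix.sub_mul, Matrix.mul_sub, trace_sub, Complex.sub_re,
    hsymm] at hnonneg
  linarith

-- The right-hand side minus the left-hand side is a sum of squares, up to the substitution of
-- `(1 - s) σ Z + s Z ρ` for `ρ`; equality holds for `K = 1` and `Y = Z`.
lemma two_mul_re_trace_conjTranspose_mul_le (hρ : ρ.PosSemidef) (hσ : σ.PosSemidef)
    (hs₀ : 0 ≤ s) (hs₁ : s ≤ 1) (hZ : (1 - s) • (σ * Z) + s • (Z * ρ) = ρ)
    (K : Matrix m n ℂ) (Y : Matrix m m ℂ) :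
    2 * (Yᴴ * (K * ρ * Kᴴ)).trace.re ≤
      ((1 - s) * (Yᴴ * (K * σ * Kᴴ) * Y).trace.re + s * (Y * (K * ρ * Kᴴ) * Yᴴ).trace.re) +
      (K * ((1 - s) • (Zᴴ * σ * Z) + s • (Z * ρ * Zᴴ)) * Kᴴ).trace.re := by
  have hleft := two_mul_re_trace_mul_le hσ (Yᴴ * K) (K * Zᴴ)
  have hright := two_mul_re_trace_mul_le hρ (K * Z) (Y * K)
  have hcross : (Yᴴ * (K * ρ * Kᴴ)).trace.re =
      (1 - s) * (Yᴴ * K * σ * (K * Zᴴ)ᴴ).trace.re + s * (K * Z * ρ * (Y * K)ᴴ).trace.re := by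
    rw [trace_mul_comm (K * Z * ρ)]
    conv_lhs => rw [← hZ]
    simp only [Matrix.mul_add, Matrix.add_mul, Matrix.mul_smul, Matrix.smul_mul, trace_add,
      trace_smul, Complex.add_re, Complex.smul_re, smul_eq_mul, conjTranspose_mul,
      conjTranspose_conjTranspose, Matrix.mul_assoc]
    rw [trace_mul_comm Kᴴ]
    simp only [Matrix.mul_assoc]
  simp only [conjTranspose_mul, conjTranspose_conjTranspose, Matrix.mul_assoc]
    at hleft hright hcross
  simp only [Matrix.mul_add, Matrix.add_mul, Matrix.mul_smul, Matrix.smul_mul, trace_add,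
    trace_smul, Complex.add_re, Complex.smul_re, smul_eq_mul, Matrix.mul_assoc]
  linarith [mul_le_mul_of_nonneg_left hleft (sub_nonneg.2 hs₁),
    mul_le_mul_of_nonneg_left hright hs₀]

lemma one_sub_mul_re_trace_of_sylvester (hρ : ρ.IsHermitian)
    (hZ : (1 - s) • (σ * Z) + s • (Z * ρ) = ρ) :
    (1 - s) * (Z * ρ - σ * Z).trace.re = (Zᴴ * ρ).trace.re - ρ.trace.re := by
  have hdiff : (1 - s) • (Z * ρ - σ * Z) = Z * ρ - ρ := by
    rw [smul_sub, eq_sub_of_add_eq hZ, sub_smul, one_smul]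
    abel
  have hadjoint : (Zᴴ * ρ).trace.re = (Z * ρ).trace.re := by
    rw [← re_trace_conjTranspose, conjTranspose_mul, conjTranspose_conjTranspose, hρ.eq,
      trace_mul_comm]
  rw [hadjoint, ← smul_eq_mul, ← Complex.smul_re, ← trace_smul, hdiff, trace_sub, Complex.sub_re]

lemma re_trace_le_of_sylvester [DecidableEq m] {l : Type*} [Fintype l] [DecidableEq l]
    {ρ' σ' Z' : Matrix l l ℂ} (φ : Matrix l l ℂ →⋆ₐ[ℂ] Matrix m m ℂ) (K : Matrix m n ℂ)
    (hρ : ρ.PosSemidef) (hσ : σ.PosSemidef) (hρ' : ρ'.IsHermitian)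
    (hφρ : ∀ X, (X * ρ').trace = (φ X * (K * ρ * Kᴴ)).trace)
    (hφσ : ∀ X, (X * σ').trace = (φ X * (K * σ * Kᴴ)).trace)
    (hs₀ : 0 ≤ s) (hs₁ : s < 1) (hZ : (1 - s) • (σ * Z) + s • (Z * ρ) = ρ)
    (hZ' : (1 - s) • (σ' * Z') + s • (Z' * ρ') = ρ') :
    (Z' * ρ' - σ' * Z').trace.re ≤ (Kᴴ * K * sylvesterMajorant ρ σ Z).trace.re := by
  have hform : (1 - s) * ((φ Z')ᴴ * (K * σ * Kᴴ) * φ Z').trace.re +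
      s * (φ Z' * (K * ρ * Kᴴ) * (φ Z')ᴴ).trace.re = (Z'ᴴ * ρ').trace.re := by
    have hσ_term : ((φ Z')ᴴ * (K * σ * Kᴴ) * φ Z').trace = (Z'ᴴ * (σ' * Z')).trace := by
      rw [trace_mul_cycle, ← star_eq_conjTranspose, ← map_star, ← map_mul, ← hφσ,
        ← trace_mul_cycle, star_eq_conjTranspose, Matrix.mul_assoc]
    have hρ_term : (φ Z' * (K * ρ * Kᴴ) * (φ Z')ᴴ).trace = (Z'ᴴ * (Z' * ρ')).trace := by
      rw [trace_mul_cycle, ← star_eq_conjTranspose, ← map_star, ← map_mul, ← hφρ,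
        star_eq_conjTranspose, Matrix.mul_assoc]
    conv_rhs => rw [← hZ']
    simp only [hσ_term, hρ_term, Matrix.mul_add, Matrix.mul_smul, trace_add, trace_smul,
      Complex.add_re, Complex.smul_re, smul_eq_mul]
  have hcross : ((φ Z')ᴴ * (K * ρ * Kᴴ)).trace.re = (Z'ᴴ * ρ').trace.re := by
    rw [← star_eq_conjTranspose, ← map_star, ← hφρ, star_eq_conjTranspose]
  have hmain := two_mul_re_trace_conjTranspose_mul_le hρ hσ hs₀ hs₁.le hZ K (φ Z')
  have hlhs := one_sub_mul_re_trace_of_sylvester hρ' hZ'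
  have hrhs : (1 - s) * (Kᴴ * K * sylvesterMajorant ρ σ Z).trace.re =
      (K * ((1 - s) • (Zᴴ * σ * Z) + s • (Z * ρ * Zᴴ)) * Kᴴ).trace.re - ρ'.trace.re := by
    have htrace : ρ'.trace = (K * ρ * Kᴴ).trace := by
      simpa only [map_one, Matrix.one_mul] using hφρ 1
    rw [← smul_eq_mul, ← Complex.smul_re, ← trace_smul, ← Matrix.mul_smul,
      smul_sylvesterMajorant hρ.isHermitian hσ.isHermitian hZ, htrace, Matrix.mul_assoc,
      trace_mul_comm, Matrix.mul_sub, Matrix.sub_mul, trace_sub, Complex.sub_re]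
  refine le_of_mul_le_mul_left ?_ (sub_pos.2 hs₁)
  linarith

end Sylvester

section SylvesterSol

variable {n : Type*} [Fintype n] [DecidableEq n] {ρ σ : Matrix n n ℂ} {p q s : ℝ}

/-- The scalar solution `z` of the Sylvester equation `(1 - s) q z + s z p = p`. -/
noncomputable def sylvesterKernel (s q p : ℝ) : ℝ := p / ((1 - s) * q + s * p)

/-- The solution `Z` of the Sylvester equation `(1 - s) σ Z + s Z ρ = ρ`. -/
noncomputable def sylvesterSol (hρ : ρ.IsHermitian) (hσ : σ.IsHermitian) (s : ℝ) : Matrix n n ℂ :=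
  bimodCfc hρ hσ (sylvesterKernel s)

lemma sylvesterKernel_eq (hp : 0 ≤ p) (hq : 0 ≤ q) (hs : s ∈ Set.Ioo (0 : ℝ) 1) :
    (1 - s) * (q * sylvesterKernel s q p) + s * (sylvesterKernel s q p * p) = p := by
  rcases hp.eq_or_lt with rfl | hp
  · simp only [sylvesterKernel, zero_div, mul_zero, add_zero]
  have hdenom : 0 < (1 - s) * q + s * p :=
    add_pos_of_nonneg_of_pos (mul_nonneg (sub_pos.2 hs.2).le hq) (mul_pos hs.1 hp)
  rw [sylvesterKernel]
  field_simp

lemma sylvesterSol_eq (hρ : ρ.PosSemidef) (hσ : σ.PosSemidef) (hs : s ∈ Set.Ioo (0 : ℝ) 1) :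
    (1 - s) • (σ * sylvesterSol hρ.isHermitian hσ.isHermitian s) +
      s • (sylvesterSol hρ.isHermitian hσ.isHermitian s * ρ) = ρ := by
  rw [sylvesterSol, mul_bimodCfc, bimodCfc_mul, smul_bimodCfc, smul_bimodCfc, bimodCfc_add]
  conv_rhs => rw [← bimodCfc_snd hρ.isHermitian hσ.isHermitian]
  exact bimodCfc_congr _ _ fun j i _ =>
    sylvesterKernel_eq (hρ.eigenvalues_nonneg i) (hσ.eigenvalues_nonneg j) hs

lemma one_sub_mul_add_mul_pos (hp : 0 < p) (hq : 0 < q) (hs : s ∈ Set.Icc (0 : ℝ) 1) :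
    0 < (1 - s) * q + s * p :=
  convex_Ioi (0 : ℝ) hq hp (sub_nonneg.2 hs.2) hs.1 (sub_add_cancel 1 s)

lemma continuousOn_sylvesterKernel (hp : 0 ≤ p) (hq : 0 ≤ q) (hpq : q = 0 → p = 0) :
    ContinuousOn (fun s => sylvesterKernel s q p) (Set.Icc 0 1) := by
  rcases hp.eq_or_lt with rfl | hp
  · simpa only [sylvesterKernel, zero_div] using continuousOn_const
  have hq : 0 < q := hq.lt_of_ne' fun h => hp.ne' (hpq h)
  exact continuousOn_const.div (by fun_prop) fun s hs => (one_sub_mul_add_mul_pos hp hq hs).ne'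

lemma intervalIntegrable_sylvesterKernel (hp : 0 ≤ p) (hq : 0 ≤ q) (hpq : q = 0 → p = 0) :
    IntervalIntegrable (fun s => sylvesterKernel s q p * p - q * sylvesterKernel s q p)
      volume 0 1 := by
  have hcont := continuousOn_sylvesterKernel hp hq hpq
  exact ((hcont.mul continuousOn_const).sub
    (continuousOn_const.mul hcont)).intervalIntegrable_of_Icc zero_le_one

lemma integral_sylvesterKernel (hp : 0 ≤ p) (hq : 0 ≤ q) (hpq : q = 0 → p = 0) :
    ∫ s in (0 : ℝ)..1, (sylvesterKernel s q p * p - q * sylvesterKernel s q p) =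
      p * (Real.log p - Real.log q) := by
  have hint := intervalIntegrable_sylvesterKernel hp hq hpq
  rcases hp.eq_or_lt with rfl | hp
  · simp only [sylvesterKernel, zero_div, mul_zero, sub_zero, intervalIntegral.integral_zero,
      zero_mul]
  have hq : 0 < q := hq.lt_of_ne' fun h => hp.ne' (hpq h)
  have hderiv : ∀ s ∈ Set.uIcc (0 : ℝ) 1, HasDerivAt (fun s => p * Real.log ((1 - s) * q + s * p))
      (sylvesterKernel s q p * p - q * sylvesterKernel s q p) s := fun s hs => by
    rw [Set.uIcc_of_le zero_le_one] at hs
    have hsegment : HasDerivAt (fun s : ℝ => (1 - s) * q + s * p) (-1 * q + 1 * p) s :=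
      (((hasDerivAt_id s).const_sub 1).mul_const q).add ((hasDerivAt_id s).mul_const p)
    refine ((hsegment.log (one_sub_mul_add_mul_pos hp hq hs).ne').const_mul p).congr_deriv ?_
    rw [sylvesterKernel]
    ring
  rw [intervalIntegral.integral_eq_sub_of_hasDerivAt hderiv hint]
  simp [mul_sub]

variable (hρ : ρ.PosSemidef) (hσ : σ.PosSemidef) (hker : ∀ v, σ *ᵥ v = 0 → ρ *ᵥ v = 0)
include hker

lemma continuousOn_sylvesterSol :
    ContinuousOn (sylvesterSol hρ.isHermitian hσ.isHermitian) (Set.Icc 0 1) :=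
  continuousOn_bimodCfc _ _ fun j i hji =>
    continuousOn_sylvesterKernel (hρ.eigenvalues_nonneg i) (hσ.eigenvalues_nonneg j)
      (eigenvalues_eq_zero_of_eigenOverlap_ne_zero _ _ hker hji)

lemma continuousOn_re_trace_sylvesterSol :
    ContinuousOn (fun s => (sylvesterSol hρ.isHermitian hσ.isHermitian s * ρ -
      σ * sylvesterSol hρ.isHermitian hσ.isHermitian s).trace.re) (Set.Icc 0 1) := by
  have hZ := continuousOn_sylvesterSol hρ hσ hker
  exact Complex.continuous_re.comp_continuousOn <| continuous_id.matrix_trace.comp_continuousOn <|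
    (hZ.mul continuousOn_const).sub (continuousOn_const.mul hZ)

lemma integral_re_trace_sylvesterSol :
    ∫ s in (0 : ℝ)..1, (sylvesterSol hρ.isHermitian hσ.isHermitian s * ρ -
      σ * sylvesterSol hρ.isHermitian hσ.isHermitian s).trace.re = relEntropy ρ σ := by
  simp only [relEntropy_eq_trace_bimodCfc hρ.isHermitian hσ.isHermitian, sylvesterSol,
    mul_bimodCfc, bimodCfc_mul, bimodCfc_sub]
  rw [integral_re_trace_bimodCfc _ _ fun j i hji => ?_]
  · refine congrArg (fun A : Matrix n n ℂ => A.trace.re) (bimodCfc_congr _ _ fun j i hji => ?_)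
    exact integral_sylvesterKernel (hρ.eigenvalues_nonneg i) (hσ.eigenvalues_nonneg j)
      (eigenvalues_eq_zero_of_eigenOverlap_ne_zero _ _ hker hji)
  · exact intervalIntegrable_sylvesterKernel (hρ.eigenvalues_nonneg i) (hσ.eigenvalues_nonneg j)
      (eigenvalues_eq_zero_of_eigenOverlap_ne_zero _ _ hker hji)

end SylvesterSol

section RelEntropyMajorant

open scoped Matrix.Norms.L2Operator

variable {m n : Type*} [Fintype m] [DecidableEq m] [Fintype n] [DecidableEq n]
  {ρ σ : Matrix n n ℂ}

lemma re_trace_mul_intervalIntegral {a b : ℝ} (B : Matrix n n ℂ) {F : ℝ → Matrix n n ℂ}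
    (hF : IntervalIntegrable F volume a b) :
    (B * ∫ s in a..b, F s).trace.re = ∫ s in a..b, (B * F s).trace.re := by
  let reTraceMul : Matrix n n ℂ →ₗ[ℝ] ℝ :=
    Complex.reLm ∘ₗ traceLinearMap n ℝ ℂ ∘ₗ LinearMap.mulLeft ℝ B
  exact (reTraceMul.toContinuousLinearMap.intervalIntegral_comp_comm hF).symm

/-- A matrix `G` with `Tr G = D(ρ‖σ)` for which `Tr (Kᴴ K G)` bounds the relative entropy of any
reduction of the pair `(K ρ Kᴴ, K σ Kᴴ)`. -/
noncomputable def relEntropyMajorant (hρ : ρ.IsHermitian) (hσ : σ.IsHermitian) : Matrix n n ℂ :=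
  ∫ s in (0 : ℝ)..1, sylvesterMajorant ρ σ (sylvesterSol hρ hσ s)

lemma continuousOn_sylvesterMajorant (hρ : ρ.PosSemidef) (hσ : σ.PosSemidef)
    (hker : ∀ v, σ *ᵥ v = 0 → ρ *ᵥ v = 0) :
    ContinuousOn (fun s => sylvesterMajorant ρ σ (sylvesterSol hρ.isHermitian hσ.isHermitian s))
      (Set.Icc 0 1) := by
  have hcont : Continuous (sylvesterMajorant ρ σ) := by
    unfold sylvesterMajorant
    fun_prop
  exact hcont.comp_continuousOn (continuousOn_sylvesterSol hρ hσ hker)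

lemma re_trace_relEntropyMajorant (hρ : ρ.PosSemidef) (hσ : σ.PosSemidef)
    (hker : ∀ v, σ *ᵥ v = 0 → ρ *ᵥ v = 0) :
    (relEntropyMajorant hρ.isHermitian hσ.isHermitian).trace.re = relEntropy ρ σ := by
  have hcont := continuousOn_sylvesterMajorant hρ hσ hker
  rw [← integral_re_trace_sylvesterSol hρ hσ hker,
    ← Matrix.one_mul (relEntropyMajorant _ _), relEntropyMajorant,
    re_trace_mul_intervalIntegral 1 (hcont.intervalIntegrable_of_Icc zero_le_one)]
  simp only [Matrix.one_mul, re_trace_sylvesterMajorant hρ.isHermitian hσ.isHermitian]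

lemma relEntropy_le_re_trace_mul_relEntropyMajorant {l : Type*} [Fintype l] [DecidableEq l]
    {ρ' σ' : Matrix l l ℂ} (φ : Matrix l l ℂ →⋆ₐ[ℂ] Matrix m m ℂ) (K : Matrix m n ℂ)
    (hρ : ρ.PosSemidef) (hσ : σ.PosSemidef) (hker : ∀ v, σ *ᵥ v = 0 → ρ *ᵥ v = 0)
    (hρ' : ρ'.PosSemidef) (hσ' : σ'.PosSemidef) (hker' : ∀ v, σ' *ᵥ v = 0 → ρ' *ᵥ v = 0)
    (hφρ : ∀ X, (X * ρ').trace = (φ X * (K * ρ * Kᴴ)).trace)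
    (hφσ : ∀ X, (X * σ').trace = (φ X * (K * σ * Kᴴ)).trace) :
    relEntropy ρ' σ' ≤
      (Kᴴ * K * relEntropyMajorant hρ.isHermitian hσ.isHermitian).trace.re := by
  have hcont := continuousOn_sylvesterMajorant hρ hσ hker
  rw [← integral_re_trace_sylvesterSol hρ' hσ' hker', relEntropyMajorant,
    re_trace_mul_intervalIntegral _ (hcont.intervalIntegrable_of_Icc zero_le_one)]
  refine intervalIntegral.integral_mono_on_of_le_Ioo zero_le_one
    ((continuousOn_re_trace_sylvesterSol hρ' hσ' hker').intervalIntegrable_of_Icc zero_le_one)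
    ?_ fun s hs => ?_
  · have hlinear : Continuous fun A : Matrix n n ℂ => (Kᴴ * K * A).trace.re := by fun_prop
    exact (hlinear.comp_continuousOn hcont).intervalIntegrable_of_Icc zero_le_one
  · exact re_trace_le_of_sylvester φ K hρ hσ hρ'.isHermitian hφρ hφσ hs.1.le hs.2
      (sylvesterSol_eq hρ hσ hs) (sylvesterSol_eq hρ' hσ' hs)

end RelEntropyMajorant


section PartialTrace

variable {a b c k l m : Type*}

/-- The ampliation `A ↦ A ⊗ 1` as a homomorphism of star algebras. -/
def kroneckerOneHom (m k : Type*) [Fintype m] [DecidableEq m] [Fintype k] [DecidableEq k] :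
    Matrix m m ℂ →⋆ₐ[ℂ] Matrix (m × k) (m × k) ℂ where
  toFun A := A ⊗ₖ 1
  map_one' := one_kronecker_one
  map_mul' A B := by rw [← mul_kronecker_mul, Matrix.one_mul]
  map_zero' := zero_kronecker _
  map_add' A B := add_kronecker A B _
  commutes' r := by
    rw [Algebra.algebraMap_eq_smul_one, Algebra.algebraMap_eq_smul_one, smul_kronecker,
      one_kronecker_one]
  map_star' A := by
    rw [star_eq_conjTranspose, star_eq_conjTranspose, conjTranspose_kronecker, conjTranspose_one]

lemma ptraceSnd_smul [Fintype k] (r : ℂ) (T : Matrix (m × k) (m × k) ℂ) :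
    ptraceSnd (r • T) = r • ptraceSnd T := by
  ext i j
  simp only [ptraceSnd, of_apply, Matrix.smul_apply, Finset.smul_sum]

lemma trace_ptraceSnd [Fintype m] [Fintype k] (T : Matrix (m × k) (m × k) ℂ) :
    (ptraceSnd T).trace = T.trace := by
  simp only [trace, diag_apply, ptraceSnd, of_apply, Fintype.sum_prod_type]

lemma ptraceSnd_eq_sum_submatrix [Fintype k] (T : Matrix (m × k) (m × k) ℂ) :
    ptraceSnd T = ∑ x, T.submatrix (·, x) (·, x) := by
  ext i j
  simp only [ptraceSnd, of_apply, Matrix.sum_apply, submatrix_apply]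

lemma posSemidef_ptraceSnd [Fintype k] {T : Matrix (m × k) (m × k) ℂ} (hT : T.PosSemidef) :
    (ptraceSnd T).PosSemidef := by
  rw [ptraceSnd_eq_sum_submatrix]
  exact posSemidef_sum _ fun x _ => hT.submatrix _

lemma mulVec_eq_zero_of_sum_mulVec_eq_zero [Fintype k] [Fintype m]
    {A : k → Matrix m m ℂ} (hA : ∀ x, (A x).PosSemidef)
    {v : m → ℂ} (hv : (∑ x, A x) *ᵥ v = 0) (x : k) : A x *ᵥ v = 0 := by
  have hsum : ∑ y, star v ⬝ᵥ (A y *ᵥ v) = 0 := by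
    rw [← dotProduct_sum, ← sum_mulVec, hv, dotProduct_zero]
  exact ((hA x).dotProduct_mulVec_zero_iff v).1 ((Finset.sum_eq_zero_iff_of_nonneg fun y _ =>
    (hA y).dotProduct_mulVec_nonneg v).1 hsum x (Finset.mem_univ x))

section TwoFactors

variable [Fintype k] [DecidableEq k] [Fintype m]

lemma trace_kronecker_one_mul (A : Matrix m m ℂ) (T : Matrix (m × k) (m × k) ℂ) :
    ((A ⊗ₖ (1 : Matrix k k ℂ)) * T).trace = (A * ptraceSnd T).trace := by
  simp only [trace, diag_apply, mul_apply, ptraceSnd, of_apply, Fintype.sum_prod_type,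
    kroneckerMap_apply, one_apply, mul_ite, ite_mul, mul_one, zero_mul, mul_zero,
    Finset.sum_ite_eq, Finset.mem_univ, if_true, Finset.mul_sum]
  exact Finset.sum_congr rfl fun i _ => Finset.sum_comm

lemma ptraceSnd_kronecker_one_mul_mul_kronecker_one (K : Matrix l m ℂ) (L : Matrix m l ℂ)
    (T : Matrix (m × k) (m × k) ℂ) :
    ptraceSnd ((K ⊗ₖ (1 : Matrix k k ℂ)) * T * (L ⊗ₖ (1 : Matrix k k ℂ))) =
      K * ptraceSnd T * L := by
  ext i j
  simp only [mul_apply, ptraceSnd, of_apply, Fintype.sum_prod_type, kroneckerMap_apply, one_apply,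
    mul_ite, ite_mul, mul_one, zero_mul, mul_zero, Finset.sum_ite_eq, Finset.sum_ite_eq',
    Finset.mem_univ, if_true, Finset.mul_sum, Finset.sum_mul]
  rw [Finset.sum_comm_cycle, Finset.sum_comm_cycle]

lemma mulVec_eq_zero_of_ptraceSnd_kronecker_one {T : Matrix (m × k) (m × k) ℂ} (hT : T.PosSemidef)
    {v : m × k → ℂ} (hv : (ptraceSnd T ⊗ₖ (1 : Matrix k k ℂ)) *ᵥ v = 0) : T *ᵥ v = 0 := by
  let slice (x : k) : m × k → ℂ := fun p => if p.2 = x then v p else 0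
  have hslice : ∀ x, T *ᵥ slice x = 0 := fun x => by
    have hptrace : ptraceSnd T *ᵥ (fun i => v (i, x)) = 0 := by
      ext i
      simpa [mulVec, dotProduct, Fintype.sum_prod_type, one_apply] using congrFun hv (i, x)
    rw [ptraceSnd_eq_sum_submatrix] at hptrace
    have hblock := mulVec_eq_zero_of_sum_mulVec_eq_zero (fun y => hT.submatrix (·, y)) hptrace x
    refine (hT.dotProduct_mulVec_zero_iff _).1 ?_
    calc star (slice x) ⬝ᵥ (T *ᵥ slice x)
        = star (fun i => v (i, x)) ⬝ᵥ (T.submatrix (·, x) (·, x) *ᵥ fun i => v (i, x)) := by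
          simp [slice, dotProduct, mulVec, Fintype.sum_prod_type, apply_ite star]
      _ = 0 := by rw [hblock, dotProduct_zero]
  have hv_eq : v = ∑ x, slice x := by
    ext p
    simp [slice]
  rw [hv_eq, mulVec_sum]
  exact Finset.sum_eq_zero fun x _ => hslice x

end TwoFactors

/-- The regrouping of a threefold product that moves its first factor to the end. -/
def rotateEquiv (a b c : Type*) : (b × c) × a ≃ (a × b) × c :=
  (Equiv.prodComm _ _).trans (Equiv.prodAssoc a b c).symm

/-- The ampliation `X ↦ 1 ⊗ X` from `H₂ ⊗ H₃` to `(H₁ ⊗ H₂) ⊗ H₃`. -/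
def oneKroneckerHom (a b c : Type*) [Fintype a] [DecidableEq a] [Fintype b] [DecidableEq b]
    [Fintype c] [DecidableEq c] :
    Matrix (b × c) (b × c) ℂ →⋆ₐ[ℂ] Matrix ((a × b) × c) ((a × b) × c) ℂ where
  toFun X := (kroneckerOneHom (b × c) a X).submatrix (rotateEquiv a b c).symm
    (rotateEquiv a b c).symm
  map_one' := by rw [map_one, submatrix_one_equiv]
  map_mul' X Y := by rw [map_mul, submatrix_mul_equiv]
  map_zero' := by rw [map_zero, submatrix_zero]; rfl
  map_add' X Y := by rw [map_add, submatrix_add]; rfl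
  commutes' r := by
    rw [Algebra.algebraMap_eq_smul_one, Algebra.algebraMap_eq_smul_one, map_smul, map_one,
      submatrix_smul]
    simp
  map_star' X := by
    rw [map_star, star_eq_conjTranspose, star_eq_conjTranspose, conjTranspose_submatrix]

lemma ptraceFst₃_eq_ptraceSnd [Fintype a] (T : Matrix ((a × b) × c) ((a × b) × c) ℂ) :
    ptraceFst₃ T = ptraceSnd (T.submatrix (rotateEquiv a b c) (rotateEquiv a b c)) := rfl

lemma posSemidef_ptraceFst₃ [Fintype a] {T : Matrix ((a × b) × c) ((a × b) × c) ℂ}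
    (hT : T.PosSemidef) : (ptraceFst₃ T).PosSemidef := by
  rw [ptraceFst₃_eq_ptraceSnd]
  exact posSemidef_ptraceSnd (hT.submatrix _)

lemma trace_mul_ptraceFst₃ [Fintype a] [DecidableEq a] [Fintype b] [DecidableEq b]
    [Fintype c] [DecidableEq c] (X : Matrix (b × c) (b × c) ℂ)
    (T : Matrix ((a × b) × c) ((a × b) × c) ℂ) :
    (X * ptraceFst₃ T).trace = (oneKroneckerHom a b c X * T).trace := by
  let e := rotateEquiv a b c
  calc (X * ptraceFst₃ T).trace
      = (kroneckerOneHom (b × c) a X * T.submatrix e e).trace := by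
        rw [ptraceFst₃_eq_ptraceSnd, ← trace_kronecker_one_mul]
        rfl
    _ = ((oneKroneckerHom a b c X * T).submatrix e e).trace := by
        rw [← submatrix_mul_equiv _ _ _ e]
        congr 2
    _ = (oneKroneckerHom a b c X * T).trace :=
        Equiv.sum_comp e fun p => (oneKroneckerHom a b c X * T) p p

lemma ptraceFst₃_kronecker_one [Fintype a] [DecidableEq c] (A : Matrix (a × b) (a × b) ℂ) :
    ptraceFst₃ (A ⊗ₖ (1 : Matrix c c ℂ)) = ptraceFst A ⊗ₖ (1 : Matrix c c ℂ) := by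
  ext p q
  simp only [ptraceFst₃, ptraceFst, of_apply, kroneckerMap_apply, Finset.sum_mul]

lemma ptraceSnd_ptraceFst₃ [Fintype a] [Fintype c] (T : Matrix ((a × b) × c) ((a × b) × c) ℂ) :
    ptraceSnd (ptraceFst₃ T) = ptraceFst (ptraceSnd T) := by
  ext i j
  simp only [ptraceFst₃, ptraceFst, ptraceSnd, of_apply]
  exact Finset.sum_comm

end PartialTrace

section ConditionalEntropy

variable {m k : Type*} [Fintype m] [DecidableEq m] [Fintype k] [DecidableEq k]

lemma cfc_kronecker_one (f : ℝ → ℝ) {A : Matrix m m ℂ} (hA : A.IsHermitian) :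
    cfc f (A ⊗ₖ (1 : Matrix k k ℂ)) = cfc f A ⊗ₖ (1 : Matrix k k ℂ) :=
  ((kroneckerOneHom m k).map_cfc f A (A.finite_real_spectrum.continuousOn f)
    (LinearMap.continuous_of_finiteDimensional (kroneckerOneHom m k).toLinearMap)
    hA.isSelfAdjoint (hA.isSelfAdjoint.map (kroneckerOneHom m k))).symm

lemma entropy_eq_trace_cfc (A : Matrix m m ℂ) : entropy A = (cfc Real.negMulLog A).trace.re := by
  by_cases hA : A.IsHermitian
  · rw [entropy, dif_pos hA, hA.cfc_eq, IsHermitian.cfc, Unitary.conjStarAlgAut_apply,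
      trace_mul_comm, ← Matrix.mul_assoc, Unitary.coe_star_mul_self, Matrix.one_mul,
      trace_diagonal]
    simp
  · rw [entropy, dif_neg hA, cfc_apply_of_not_predicate (R := ℝ) (p := IsSelfAdjoint) A hA,
      trace_zero, Complex.zero_re]

lemma re_trace_mul_cfc_log {A : Matrix m m ℂ} (hA : A.IsHermitian) :
    (A * cfc Real.log A).trace.re = -entropy A := by
  have hmul : A * cfc Real.log A = cfc (fun x => x * Real.log x) A := by
    rw [cfc_mul (fun x => x) Real.log A (A.finite_real_spectrum.continuousOn _)
      (A.finite_real_spectrum.continuousOn _), cfc_id' ℝ A hA.isSelfAdjoint]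
  simp only [entropy_eq_trace_cfc, hmul, Real.negMulLog_def, neg_mul, cfc_neg, trace_neg,
    Complex.neg_re, neg_neg]

lemma entropy_smul {A : Matrix m m ℂ} (hA : A.IsHermitian) (r : ℝ) :
    entropy ((r : ℂ) • A) = r * entropy A + Real.negMulLog r * A.trace.re := by
  have hspec := A.finite_real_spectrum
  have hcfc : cfc Real.negMulLog (r • A) = Real.negMulLog r • A + r • cfc Real.negMulLog A := by
    rw [← cfc_comp_const_mul r Real.negMulLog A ((hspec.image _).continuousOn _) hA.isSelfAdjoint]
    simp only [Real.negMulLog_mul, mul_comm _ (Real.negMulLog r)]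
    rw [cfc_add _ _ _ (hspec.continuousOn _) (hspec.continuousOn _),
      cfc_const_mul _ _ _ (hspec.continuousOn _), cfc_const_mul _ _ _ (hspec.continuousOn _),
      cfc_id' ℝ A hA.isSelfAdjoint]
  rw [entropy_eq_trace_cfc, entropy_eq_trace_cfc, Complex.coe_smul, hcfc, trace_add, trace_smul,
    trace_smul, Complex.add_re, Complex.smul_re, Complex.smul_re, smul_eq_mul, smul_eq_mul,
    add_comm]

/-- The conditional entropy `S[ρ] - S[Tr₂ ρ]` of a bipartite operator. -/
noncomputable def condEntropy (ρ : Matrix (m × k) (m × k) ℂ) : ℝ :=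
  entropy ρ - entropy (ptraceSnd ρ)

lemma condEntropy_smul {ρ : Matrix (m × k) (m × k) ℂ} (hρ : ρ.PosSemidef) (r : ℝ) :
    condEntropy ((r : ℂ) • ρ) = r * condEntropy ρ := by
  rw [condEntropy, condEntropy, ptraceSnd_smul, entropy_smul hρ.isHermitian,
    entropy_smul (posSemidef_ptraceSnd hρ).isHermitian, trace_ptraceSnd]
  ring

lemma condEntropy_zero : condEntropy (0 : Matrix (m × k) (m × k) ℂ) = 0 := by
  simpa only [Complex.ofReal_zero, zero_smul, zero_mul] using
    condEntropy_smul (PosSemidef.zero (n := m × k) (R := ℂ)) 0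

lemma relEntropy_ptraceSnd_kronecker_one {ρ : Matrix (m × k) (m × k) ℂ} (hρ : ρ.PosSemidef) :
    relEntropy ρ (ptraceSnd ρ ⊗ₖ (1 : Matrix k k ℂ)) = -condEntropy ρ := by
  have hρ₁ := (posSemidef_ptraceSnd hρ).isHermitian
  rw [relEntropy, cfc_kronecker_one _ hρ₁, Matrix.mul_sub, trace_sub, trace_mul_comm ρ (_ ⊗ₖ _),
    trace_kronecker_one_mul, trace_mul_comm _ (ptraceSnd ρ), Complex.sub_re,
    re_trace_mul_cfc_log hρ.isHermitian, re_trace_mul_cfc_log hρ₁, condEntropy]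
  ring

end ConditionalEntropy

section KrausReduced

variable {a b c m : Type*} [Fintype a] [Fintype c] [DecidableEq c] [Fintype m]

/-- The unnormalised state `Tr₁ (K ⊗ 1) ρ (Kᴴ ⊗ 1)` on `H₂ ⊗ H₃` left by the Kraus operator `K`,
which takes values in `H₁ ⊗ H₂`. -/
noncomputable def krausReduced (K : Matrix (a × b) m ℂ) (ρ : Matrix (m × c) (m × c) ℂ) :
    Matrix (b × c) (b × c) ℂ :=
  ptraceFst₃ ((K ⊗ₖ (1 : Matrix c c ℂ)) * ρ * (Kᴴ ⊗ₖ (1 : Matrix c c ℂ)))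

lemma posSemidef_kronecker_one_mul_mul_kronecker_one {l : Type*} [Finite l] (K : Matrix l m ℂ)
    {ρ : Matrix (m × c) (m × c) ℂ} (hρ : ρ.PosSemidef) :
    ((K ⊗ₖ (1 : Matrix c c ℂ)) * ρ * (Kᴴ ⊗ₖ (1 : Matrix c c ℂ))).PosSemidef := by
  simpa only [conjTranspose_kronecker, conjTranspose_one] using
    hρ.mul_mul_conjTranspose_same (K ⊗ₖ (1 : Matrix c c ℂ))

lemma posSemidef_krausReduced [Finite b] (K : Matrix (a × b) m ℂ) {ρ : Matrix (m × c) (m × c) ℂ}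
    (hρ : ρ.PosSemidef) : (krausReduced K ρ).PosSemidef :=
  posSemidef_ptraceFst₃ (posSemidef_kronecker_one_mul_mul_kronecker_one K hρ)

lemma krausReduced_ptraceSnd_kronecker_one (K : Matrix (a × b) m ℂ)
    (ρ : Matrix (m × c) (m × c) ℂ) :
    krausReduced K (ptraceSnd ρ ⊗ₖ (1 : Matrix c c ℂ)) =
      ptraceSnd (krausReduced K ρ) ⊗ₖ (1 : Matrix c c ℂ) := by
  rw [krausReduced, krausReduced, ptraceSnd_ptraceFst₃,
    ptraceSnd_kronecker_one_mul_mul_kronecker_one, ← mul_kronecker_mul, ← mul_kronecker_mul,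
    Matrix.one_mul, Matrix.one_mul, ptraceFst₃_kronecker_one]

lemma trace_mul_krausReduced [DecidableEq a] [Fintype b] [DecidableEq b] (K : Matrix (a × b) m ℂ)
    (ρ : Matrix (m × c) (m × c) ℂ) (X : Matrix (b × c) (b × c) ℂ) :
    (X * krausReduced K ρ).trace = (oneKroneckerHom a b c X *
      ((K ⊗ₖ (1 : Matrix c c ℂ)) * ρ * (K ⊗ₖ (1 : Matrix c c ℂ))ᴴ)).trace := by
  rw [krausReduced, trace_mul_ptraceFst₃, conjTranspose_kronecker, conjTranspose_one]

lemma condEntropy_krausReduced_eq_zero [Fintype b] [DecidableEq b] {K : Matrix (a × b) m ℂ}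
    {ρ : Matrix (m × c) (m × c) ℂ} (hρ : ρ.PosSemidef)
    (htrace : ((K ⊗ₖ (1 : Matrix c c ℂ)) * ρ * (Kᴴ ⊗ₖ (1 : Matrix c c ℂ))).trace.re = 0) :
    condEntropy (krausReduced K ρ) = 0 := by
  have hT := posSemidef_kronecker_one_mul_mul_kronecker_one K hρ
  have hT_zero := hT.trace_eq_zero_iff.1 (Complex.ext htrace hT.trace_nonneg.2.symm)
  have hreduced : krausReduced K ρ = 0 := by
    rw [krausReduced, hT_zero]
    ext p q
    simp [ptraceFst₃]
  rw [hreduced, condEntropy_zero]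

end KrausReduced

section TraceIntegral

variable {m Ω : Type*} [Fintype m] [MeasurableSpace Ω] {μ : Measure Ω}

lemma integrable_trace_mul {B : Ω → Matrix m m ℂ}
    (hB : ∀ i j, Integrable (fun α => B α i j) μ) (G : Matrix m m ℂ) :
    Integrable (fun α => (B α * G).trace) μ := by
  simp only [trace, diag_apply, mul_apply]
  exact integrable_finsetSum _ fun i _ => integrable_finsetSum _ fun j _ => (hB i j).mul_const _

lemma integral_trace_mul {B : Ω → Matrix m m ℂ}
    (hB : ∀ i j, Integrable (fun α => B α i j) μ) (G : Matrix m m ℂ) :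
    ∫ α, (B α * G).trace ∂μ = ((of fun i j => ∫ α, B α i j ∂μ) * G).trace := by
  have hterm : ∀ i j, Integrable (fun α => B α i j * G j i) μ := fun i j => (hB i j).mul_const _
  simp only [trace, diag_apply, mul_apply, of_apply]
  rw [integral_finsetSum _ fun i _ => integrable_finsetSum _ fun j _ => hterm i j]
  simp only [integral_finsetSum _ fun j _ => hterm _ j, integral_mul_const]

end TraceIntegral

section StrongerSubadditivity

variable {a b c m : Type*} [Fintype a] [Fintype b] [DecidableEq b]
  [Fintype c] [DecidableEq c] [Fintype m] [DecidableEq m]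

/-- The matrix `-Tr₃ G`, where `G` is the majorant of the relative entropy of `ρ` with respect to
`ρ₁₂ ⊗ 1`. It has trace `S[ρ] - S[ρ₁₂]`, and weighting it by `Kᴴ K` bounds the conditional entropy
left by the Kraus operator `K` from below. -/
noncomputable def condEntropyMinorant {ρ : Matrix (m × c) (m × c) ℂ} (hρ : ρ.PosSemidef) :
    Matrix m m ℂ :=
  -ptraceSnd (relEntropyMajorant hρ.isHermitian
    ((posSemidef_ptraceSnd hρ).kronecker (PosSemidef.one (n := c))).isHermitian)

lemma re_trace_condEntropyMinorant {ρ : Matrix (m × c) (m × c) ℂ} (hρ : ρ.PosSemidef) :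
    (condEntropyMinorant hρ).trace.re = condEntropy ρ := by
  rw [condEntropyMinorant, trace_neg, trace_ptraceSnd, Complex.neg_re,
    re_trace_relEntropyMajorant hρ ((posSemidef_ptraceSnd hρ).kronecker PosSemidef.one)
      fun v => mulVec_eq_zero_of_ptraceSnd_kronecker_one hρ,
    relEntropy_ptraceSnd_kronecker_one hρ, neg_neg]

lemma re_trace_mul_condEntropyMinorant_le {ρ : Matrix (m × c) (m × c) ℂ} (hρ : ρ.PosSemidef)
    (K : Matrix (a × b) m ℂ) :
    (Kᴴ * K * condEntropyMinorant hρ).trace.re ≤ condEntropy (krausReduced K ρ) := by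
  classical
  have hτ := posSemidef_krausReduced K hρ
  have hσ := (posSemidef_ptraceSnd hρ).kronecker (PosSemidef.one (n := c) (R := ℂ))
  have hσ' := (posSemidef_ptraceSnd hτ).kronecker (PosSemidef.one (n := c) (R := ℂ))
  have hle := relEntropy_le_re_trace_mul_relEntropyMajorant (oneKroneckerHom a b c)
    (K ⊗ₖ (1 : Matrix c c ℂ)) hρ hσ
    (fun v => mulVec_eq_zero_of_ptraceSnd_kronecker_one hρ) hτ hσ'
    (fun v => mulVec_eq_zero_of_ptraceSnd_kronecker_one hτ) (trace_mul_krausReduced K ρ)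
    (by simpa only [krausReduced_ptraceSnd_kronecker_one] using
      trace_mul_krausReduced K (ptraceSnd ρ ⊗ₖ (1 : Matrix c c ℂ)))
  rw [relEntropy_ptraceSnd_kronecker_one hτ, conjTranspose_kronecker, conjTranspose_one,
    ← mul_kronecker_mul, Matrix.one_mul, trace_kronecker_one_mul] at hle
  rw [condEntropyMinorant, Matrix.mul_neg, trace_neg, Complex.neg_re]
  exact neg_le.1 hle

variable {Ω : Type*} [MeasurableSpace Ω] {μ : Measure Ω}

lemma condEntropy_le_integral_condEntropy_krausReduced {ρ : Matrix (m × c) (m × c) ℂ}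
    (hρ : ρ.PosSemidef) {K : Ω → Matrix (a × b) m ℂ}
    (hKint : ∀ i j, Integrable (fun α => ((K α)ᴴ * K α) i j) μ)
    (hKres : ∀ i j, ∫ α, ((K α)ᴴ * K α) i j ∂μ = (1 : Matrix m m ℂ) i j)
    (hint : Integrable (fun α => condEntropy (krausReduced (K α) ρ)) μ) :
    condEntropy ρ ≤ ∫ α, condEntropy (krausReduced (K α) ρ) ∂μ := by
  have hminorant := integrable_trace_mul hKint (condEntropyMinorant hρ)
  have hone : (of fun i j => ∫ α, ((K α)ᴴ * K α) i j ∂μ) = (1 : Matrix m m ℂ) := ext hKres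
  calc condEntropy ρ = (∫ α, ((K α)ᴴ * K α * condEntropyMinorant hρ).trace ∂μ).re := by
        rw [integral_trace_mul hKint, hone, Matrix.one_mul, re_trace_condEntropyMinorant]
    _ = ∫ α, ((K α)ᴴ * K α * condEntropyMinorant hρ).trace.re ∂μ := (integral_re hminorant).symm
    _ ≤ ∫ α, condEntropy (krausReduced (K α) ρ) ∂μ :=
      integral_mono hminorant.re hint fun α => re_trace_mul_condEntropyMinorant_le hρ (K α)

theorem stronger_subadditivity_integral_general (ρ : Matrix (m × c) (m × c) ℂ) (hρ : ρ.PosSemidef)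
    (K : Ω → Matrix (a × b) m ℂ)
    (hKint : ∀ i j, Integrable (fun α => ((K α)ᴴ * K α) i j) μ)
    (hKres : ∀ i j, (∫ α, ((K α)ᴴ * K α) i j ∂μ) = (1 : Matrix m m ℂ) i j)
    (n : Ω → ℝ)
    (hn : ∀ α, n α =
      ((K α ⊗ₖ (1 : Matrix c c ℂ)) * ρ * ((K α)ᴴ ⊗ₖ (1 : Matrix c c ℂ))).trace.re)
    (ρ23 : Ω → Matrix (b × c) (b × c) ℂ)
    (hρ23 : ∀ α, 0 < n α → ρ23 α = (n α : ℂ)⁻¹ • krausReduced (K α) ρ)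
    (ρ2 : Ω → Matrix b b ℂ) (hρ2 : ∀ α, 0 < n α → ρ2 α = ptraceSnd (ρ23 α))
    (hwd : IntegrableOn (fun α => n α * (entropy (ρ23 α) - entropy (ρ2 α))) {α | 0 < n α} μ) :
    entropy ρ - entropy (ptraceSnd ρ) ≤
      ∫ α in {α | 0 < n α}, n α * (entropy (ρ23 α) - entropy (ρ2 α)) ∂μ := by
  have hn_nonneg : ∀ α, 0 ≤ n α := fun α => (hn α).symm ▸
    (posSemidef_kronecker_one_mul_mul_kronecker_one (K α) hρ).trace_nonneg.1
  have hweighted : (fun α => n α * (entropy (ρ23 α) - entropy (ρ2 α))) =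
      fun α => condEntropy (krausReduced (K α) ρ) := funext fun α => by
    rcases (hn_nonneg α).eq_or_lt with hα | hα
    · rw [← hα, zero_mul, condEntropy_krausReduced_eq_zero hρ ((hn α).symm.trans hα.symm)]
    · rw [hρ2 α hα, hρ23 α hα, ← condEntropy, ← Complex.ofReal_inv,
        condEntropy_smul (posSemidef_krausReduced (K α) hρ), mul_inv_cancel_left₀ hα.ne']
  have hsupport : ∀ α ∉ {α | 0 < n α}, condEntropy (krausReduced (K α) ρ) = 0 := fun α hα =>
    condEntropy_krausReduced_eq_zero hρ <|
      (hn α).symm.trans ((not_lt.1 hα).antisymm (hn_nonneg α))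
  rw [hweighted] at hwd ⊢
  rw [setIntegral_eq_integral_of_forall_compl_eq_zero hsupport]
  exact condEntropy_le_integral_condEntropy_krausReduced hρ hKint hKres
    ((integrableOn_iff_integrable_of_support_subset (Function.support_subset_iff'.2 hsupport)).1
      hwd)

end StrongerSubadditivity

/-- **Stronger subadditivity with a continuum of operators**
(finite-dimensional integral version):
`S[ρ₁₂₃] − S[ρ₁₂] ≤ ∫_{α : n^α>0} n^α (S[ρ₂₃^α] − S[ρ₂^α]) dμ(α)`.
(By the boundedness of the entropy and `∫ n^α dμ(α) = 1`, the integrand on the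
right is integrable; this is recorded in the hypothesis `hwd`.) -/
theorem stronger_subadditivity_integral
    {n₁ n₂ n₃ : Type*} [Fintype n₁] [Fintype n₂] [Fintype n₃]
    [DecidableEq n₁] [DecidableEq n₂] [DecidableEq n₃]
    {Ω : Type*} [MeasurableSpace Ω] (μ : Measure Ω)
    (ρ : Matrix ((n₁ × n₂) × n₃) ((n₁ × n₂) × n₃) ℂ)
    (hρ : ρ.PosSemidef) (hρtr : ρ.trace = 1)
    (K : Ω → Matrix (n₁ × n₂) (n₁ × n₂) ℂ)
    (hKm : ∀ i j, Measurable fun α => K α i j)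
    (hKint : ∀ i j, Integrable (fun α => ((K α)ᴴ * K α) i j) μ)
    (hKres : ∀ i j, (∫ α, ((K α)ᴴ * K α) i j ∂μ) =
      (1 : Matrix (n₁ × n₂) (n₁ × n₂) ℂ) i j)
    (n : Ω → ℝ)
    (hn : ∀ α, n α =
      (((K α ⊗ₖ (1 : Matrix n₃ n₃ ℂ)) * ρ *
        ((K α)ᴴ ⊗ₖ (1 : Matrix n₃ n₃ ℂ))).trace).re)
    (ρ23 : Ω → Matrix (n₂ × n₃) (n₂ × n₃) ℂ)
    (hρ23 : ∀ α, 0 < n α → ρ23 α = ((n α : ℂ))⁻¹ •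
      ptraceFst₃ ((K α ⊗ₖ (1 : Matrix n₃ n₃ ℂ)) * ρ *
        ((K α)ᴴ ⊗ₖ (1 : Matrix n₃ n₃ ℂ))))
    (ρ2 : Ω → Matrix n₂ n₂ ℂ)
    (hρ2 : ∀ α, 0 < n α → ρ2 α = ptraceSnd (ρ23 α))
    (hwd : IntegrableOn (fun α => n α * (entropy (ρ23 α) - entropy (ρ2 α)))
      {α | 0 < n α} μ) :
    entropy ρ - entropy (ptraceSnd ρ) ≤
      ∫ α in {α | 0 < n α}, n α * (entropy (ρ23 α) - entropy (ρ2 α)) ∂μ :=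
  stronger_subadditivity_integral_general ρ hρ K hKint hKres n hn ρ23 hρ23 ρ2 hρ2 hwd
end
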